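/- arXiv:2204.07006 — 2 statements merged into one kernel-verified Lean document; each statement's English description precedes it below -/
import Mathlib

section
/- Let A → B be a local morphism of regular local rings with dim(A) = dim(B) + 1, and M a B-module finitely generated over A with dim_k Tor_1^A(M,k) ≤ dim_k Tor_0^A(M,k), where k is the residue field of A. Then M is free over B. -/
open IsLocalRing CategoryTheory

/-- The embedding dimension of a local ring: the minimal number of generators of its
maximal ideal. -/
noncomputable def edim (A : Type) [CommRing A] [IsLocalRing A] : ℕ :=
  sInf {k : ℕ | ∃ y : Fin k → A, Ideal.span (Set.range y) = maximalIdeal A}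

/-- A regular local ring: a Noetherian local ring whose embedding dimension equals its
Krull dimension. -/
def IsRegularLocal (R : Type) [CommRing R] [IsLocalRing R] : Prop :=
  IsNoetherianRing R ∧ (edim R : WithBot ℕ∞) = ringKrullDim R

/-- `Tor₁^A(M, k)`, where `k` is the residue field of the local ring `A`. -/
noncomputable def torOne (A : Type) [CommRing A] [IsLocalRing A]
    (M : Type) [AddCommGroup M] [Module A M] : ModuleCat A :=
  ((Tor (ModuleCat A) 1).obj (ModuleCat.of A M)).obj
    (ModuleCat.of A (A ⧸ maximalIdeal A))

/-!
Let `k` be the residue field of `A` and `n = dim (k ⊗ M)`. A minimal cover `p : Aⁿ → M` satisfies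
`Tor₁(M, k) ≅ k ⊗ ker p`, so by Nakayama the hypothesis makes `ker p` a quotient of `Aⁿ`: there is a
square presentation `φ : Aⁿ → Aⁿ` of `M`. Since `M` is a `B`-module finite over `A`, the dimension
of `A ⧸ Ann M` is at most `dim B < depth A`, whereas `dim (A ⧸ P) ≥ depth A` for every associated
prime `P` of `A`; hence `Ann M` contains a nonzerodivisor, which forces `φ` to be injective. The
exact sequence `0 → Aⁿ → Aⁿ → M → 0` then gives `depth_A M ≥ dim B`.

Freeness follows by induction on `dim B`, without the Auslander–Buchsbaum formula: as `A → B` is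
local, `Hom_A(k, M) = 0` keeps the maximal ideal `m` of `B` out of `Ass_B M`, so prime avoidance
gives an `M`-regular `x` in `m` outside `m²`, and freeness of `M ⧸ xM` over the regular local ring
`B ⧸ x` lifts to `M`.
-/

universe u v

section LocalRing

variable {R : Type u} [CommRing R] [IsLocalRing R]

lemma isLocalRing_quotient_span_singleton {x : R} (hx : x ∈ maximalIdeal R) :
    IsLocalRing (R ⧸ Ideal.span {x}) := by
  have : Nontrivial (R ⧸ Ideal.span {x}) :=
    Ideal.Quotient.nontrivial_iff.mpr (by rwa [Ne, Ideal.span_singleton_eq_top])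
  exact .of_surjective' _ Ideal.Quotient.mk_surjective

lemma ringKrullDim_le_ringKrullDim_quotient_span_singleton_add_one [IsNoetherianRing R] {x : R}
    (hx : x ∈ maximalIdeal R) : ringKrullDim R ≤ ringKrullDim (R ⧸ Ideal.span {x}) + 1 := by
  simpa only [Set.encard_singleton, WithBot.coe_one] using
    ringKrullDim_le_ringKrullDim_quotient_add_encard {x}
      (by simpa [ringJacobson_eq_maximalIdeal] using hx)

lemma exists_mem_span_insert_erase {M : Type*} [AddCommGroup M] [Module R M] [DecidableEq M]
    {s : Finset M} {x : M} (hx : x ∈ Submodule.span R (s : Set M))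
    (hx' : x ∉ maximalIdeal R • Submodule.span R (s : Set M)) :
    ∃ y ∈ s, y ∈ Submodule.span R (insert x (s.erase y : Set M)) := by
  obtain ⟨c, -, rfl⟩ := Submodule.mem_span_finset.mp hx
  obtain ⟨y, hys, hy⟩ : ∃ y ∈ s, c y ∉ maximalIdeal R := by
    by_contra! hc
    exact hx' (sum_mem fun y hy ↦ Submodule.smul_mem_smul (hc y hy) (Submodule.subset_span hy))
  refine ⟨y, hys, ?_⟩
  rw [← Submodule.smul_mem_iff_of_isUnit _ (notMem_maximalIdeal.mp hy),
    eq_sub_of_add_eq (Finset.add_sum_erase s (fun a ↦ c a • a) hys)]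
  refine sub_mem (Submodule.subset_span (Set.mem_insert _ _)) (sum_mem fun z hz ↦ ?_)
  exact Submodule.smul_mem _ _ (Submodule.subset_span (Set.mem_insert_of_mem _ hz))

lemma spanFinrank_maximalIdeal_quotient_add_one_le [IsNoetherianRing R] {x : R}
    (hx : x ∈ maximalIdeal R) (hx' : x ∉ maximalIdeal R ^ 2) [IsLocalRing (R ⧸ Ideal.span {x})] :
    (maximalIdeal (R ⧸ Ideal.span {x})).spanFinrank + 1 ≤ (maximalIdeal R).spanFinrank := by
  classical
  obtain ⟨s, hs, hspan⟩ :=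
    (IsNoetherian.noetherian (maximalIdeal R)).exists_span_finset_card_eq_spanFinrank
  obtain ⟨y, hys, hy⟩ := exists_mem_span_insert_erase (R := R) (hspan ▸ hx)
    (by rwa [hspan, smul_eq_mul, ← pow_two])
  have hspan' : Ideal.span (insert x (s.erase y : Set R)) = maximalIdeal R := by
    refine le_antisymm ?_ (hspan.symm.le.trans (Submodule.span_le.mpr fun z hz ↦ ?_))
    · refine Ideal.span_le.mpr (Set.insert_subset hx fun z hz ↦ ?_)
      exact hspan ▸ Submodule.subset_span (Finset.mem_of_mem_erase hz)
    · obtain rfl | hzy := eq_or_ne z y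
      · exact hy
      · exact Submodule.subset_span (.inr (Finset.mem_erase.mpr ⟨hzy, hz⟩))
  let π := Ideal.Quotient.mk (Ideal.span {x})
  have hgen : maximalIdeal (R ⧸ Ideal.span {x}) = Ideal.span ((s.erase y).image π) := by
    rw [← map_maximalIdeal_of_surjective π Ideal.Quotient.mk_surjective, ← hspan', Ideal.map_span,
      Set.image_insert_eq, Ideal.Quotient.eq_zero_iff_mem.mpr (Ideal.mem_span_singleton_self x),
      Ideal.span_insert_zero, Finset.coe_image]
  rw [hgen, ← hs, ← Finset.card_erase_add_one hys]
  gcongr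
  exact (Submodule.spanFinrank_span_le_ncard_of_finite (Finset.finite_toSet _)).trans
    (by simpa only [Set.ncard_coe_finset] using Finset.card_image_le)

lemma exists_mem_maximalIdeal_notMem_sq_notMem_primes [IsNoetherianRing R] (hR : maximalIdeal R ≠ ⊥)
    {S : Set (Ideal R)} (hS : S.Finite) (hprime : ∀ p ∈ S, p.IsPrime) (hm : maximalIdeal R ∉ S) :
    ∃ x ∈ maximalIdeal R, x ∉ maximalIdeal R ^ 2 ∧ ∀ p ∈ S, x ∉ p := by
  have hsq : ¬ maximalIdeal R ≤ maximalIdeal R ^ 2 := fun hle ↦ by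
    have hidem : IsIdempotentElem (maximalIdeal R) :=
      (pow_two _).symm.trans (le_antisymm (Ideal.pow_le_self two_ne_zero) hle)
    obtain hbot | htop := (Ideal.isIdempotentElem_iff_eq_bot_or_top_of_isLocalRing _).mp hidem
    · exact hR hbot
    · exact Ideal.IsPrime.ne_top' htop
  by_contra! h
  have hcover : (maximalIdeal R : Set R) ⊆ ⋃ p ∈ insert (maximalIdeal R ^ 2) S, (p : Set R) := by
    intro x hx
    by_cases hx' : x ∈ maximalIdeal R ^ 2
    · exact Set.mem_biUnion (Set.mem_insert _ _) hx'
    · obtain ⟨p, hp, hxp⟩ := h x hx hx'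
      exact Set.mem_biUnion (Set.mem_insert_of_mem _ hp) hxp
  obtain ⟨p, rfl | hp, hle⟩ := (Ideal.subset_union_prime_finite (hS.insert _) (f := id)
    (maximalIdeal R ^ 2) (maximalIdeal R ^ 2) fun p hp hne _ ↦ hprime p (hp.resolve_left hne)).mp
    hcover
  · exact hsq hle
  · exact hm ((maximalIdeal.isMaximal R).eq_of_le (hprime p hp).ne_top hle ▸ hp)

lemma isPrime_bot_of_isPrime_span_singleton [IsNoetherianRing R] {x : R}
    (hx : x ∈ maximalIdeal R) (hprime : (Ideal.span {x}).IsPrime)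
    (hmin : ∀ p ∈ minimalPrimes R, x ∉ p) : (⊥ : Ideal R).IsPrime := by
  obtain ⟨q, hq, hqx⟩ := Ideal.exists_minimalPrimes_le (bot_le (a := Ideal.span {x}))
  have hqx' : q ≤ maximalIdeal R • q := fun y hy ↦ by
    obtain ⟨a, rfl⟩ := Ideal.mem_span_singleton'.mp (hqx hy)
    rw [mul_comm]
    exact Submodule.smul_mem_smul hx ((hq.1.1.mem_or_mem hy).resolve_right (hmin q hq))
  have hq0 : q = ⊥ := Submodule.eq_bot_of_le_smul_of_le_jacobson_bot (maximalIdeal R) _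
    (IsNoetherian.noetherian _) hqx' (maximalIdeal_le_jacobson _)
  exact hq0 ▸ hq.1.1

end LocalRing

section RegularLocalRing

open RingTheory.Sequence

variable {R : Type u} [CommRing R] [IsRegularLocalRing R]

lemma spanFinrank_maximalIdeal_quotient_add_one {x : R} (hx : x ∈ maximalIdeal R)
    (hx' : x ∉ maximalIdeal R ^ 2) [IsLocalRing (R ⧸ Ideal.span {x})] :
    (maximalIdeal (R ⧸ Ideal.span {x})).spanFinrank + 1 = (maximalIdeal R).spanFinrank := by
  refine le_antisymm (spanFinrank_maximalIdeal_quotient_add_one_le hx hx') ?_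
  have hdim := ringKrullDim_le_ringKrullDim_quotient_span_singleton_add_one hx
  rw [← IsRegularLocalRing.spanFinrank_maximalIdeal] at hdim
  exact_mod_cast hdim.trans (add_le_add_left (ringKrullDim_le_spanFinrank_maximalIdeal _) 1)

lemma isRegularLocalRing_quotient_span_singleton {x : R} (hx : x ∈ maximalIdeal R)
    (hx' : x ∉ maximalIdeal R ^ 2) : IsRegularLocalRing (R ⧸ Ideal.span {x}) := by
  have := isLocalRing_quotient_span_singleton hx
  refine .of_spanFinrank_maximalIdeal_le _ (ENat.WithBot.add_le_add_one_right_iff.mp ?_)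
  calc ((maximalIdeal (R ⧸ Ideal.span {x})).spanFinrank : WithBot ℕ∞) + 1
    _ ≤ ringKrullDim R := by
      rw [← IsRegularLocalRing.spanFinrank_maximalIdeal]
      exact_mod_cast spanFinrank_maximalIdeal_quotient_add_one_le hx hx'
    _ ≤ ringKrullDim (R ⧸ Ideal.span {x}) + 1 :=
      ringKrullDim_le_ringKrullDim_quotient_span_singleton_add_one hx

lemma maximalIdeal_notMem_minimalPrimes (hR : maximalIdeal R ≠ ⊥) :
    maximalIdeal R ∉ minimalPrimes R := fun hmin ↦ by
  have h := IsRegularLocalRing.spanFinrank_maximalIdeal (R := R)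
  rw [← maximalIdeal_height_eq_ringKrullDim, Ideal.height_eq_zero_iff.mpr hmin] at h
  exact hR ((Submodule.spanFinrank_eq_zero_iff_eq_bot (IsNoetherian.noetherian _)).mp
    (by exact_mod_cast h))

theorem isDomain_of_isRegularLocalRing (R : Type u) [CommRing R] [IsRegularLocalRing R] :
    IsDomain R := by
  induction h : (maximalIdeal R).spanFinrank generalizing R with
  | zero =>
    have hbot := (Submodule.spanFinrank_eq_zero_iff_eq_bot (IsNoetherian.noetherian _)).mp h
    exact (isField_iff_maximalIdeal_eq.mpr hbot).isDomain
  | succ n ih =>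
    have hR : maximalIdeal R ≠ ⊥ := fun h0 ↦ by simp [h0] at h
    obtain ⟨x, hx, hx', hmin⟩ := exists_mem_maximalIdeal_notMem_sq_notMem_primes hR
      (minimalPrimes.finite_of_isNoetherianRing R) (fun p hp ↦ hp.1.1)
      (maximalIdeal_notMem_minimalPrimes hR)
    have := isRegularLocalRing_quotient_span_singleton hx hx'
    have hdom := ih (R ⧸ Ideal.span {x})
      (Nat.succ_injective ((spanFinrank_maximalIdeal_quotient_add_one hx hx').trans h))
    have := isPrime_bot_of_isPrime_span_singleton hx
      ((Ideal.Quotient.isDomain_iff_prime _).mp hdom) hmin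
    exact .of_bot_isPrime R

theorem exists_isWeaklyRegular_of_isRegularLocalRing (R : Type u) [CommRing R]
    [IsRegularLocalRing R] :
    ∃ rs : List R, rs.length = (maximalIdeal R).spanFinrank ∧ (∀ r ∈ rs, r ∈ maximalIdeal R) ∧
      IsWeaklyRegular R rs := by
  induction h : (maximalIdeal R).spanFinrank generalizing R with
  | zero => exact ⟨[], rfl, by simp, by simp⟩
  | succ n ih =>
    have := isDomain_of_isRegularLocalRing R
    obtain ⟨x, hx, hx', -⟩ := exists_mem_maximalIdeal_notMem_sq_notMem_primes
      (R := R) (fun h0 ↦ by simp [h0] at h) Set.finite_empty (by simp) (by simp)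
    have := isRegularLocalRing_quotient_span_singleton hx hx'
    obtain ⟨rs, hlen, hmem, hrs⟩ := ih (R ⧸ Ideal.span {x})
      (Nat.succ_injective ((spanFinrank_maximalIdeal_quotient_add_one hx hx').trans h))
    obtain ⟨rs, rfl⟩ := List.map_surjective_iff.mpr Ideal.Quotient.mk_surjective rs
    have hx0 : x ≠ 0 := fun h0 ↦ hx' (h0 ▸ zero_mem _)
    have hmem' : ∀ r ∈ rs, r ∈ maximalIdeal R := fun r hr ↦ by
      have := IsLocalHom.of_surjective (Ideal.Quotient.mk (Ideal.span {x}))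
        Ideal.Quotient.mk_surjective
      exact (map_mem_nonunits_iff _ r).mp (hmem _ (List.mem_map_of_mem hr))
    refine ⟨x :: rs, by simpa using hlen, by simpa using ⟨hx, hmem'⟩, ?_⟩
    let e : QuotSMulTop x R ≃ₗ[R] R ⧸ Ideal.span {x} :=
      Submodule.quotEquivOfEq _ _ (by simp [← Submodule.ideal_span_singleton_smul])
    refine (isWeaklyRegular_cons_iff R x rs).mpr ⟨.of_ne_zero hx0, ?_⟩
    exact (e.isWeaklyRegular_congr rs).mpr
      ((isWeaklyRegular_map_algebraMap_iff (R ⧸ Ideal.span {x}) _ rs).mp hrs)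

end RegularLocalRing

section Depth

open Abelian RingTheory.Sequence

/-- `depth_A M ≥ d` over a local ring `A`, encoded through Rees' criterion: `Ext^i_A(k, M) = 0` for
all `i < d`, where `k` is the residue field. The zero module has infinite depth. -/
def DepthGE (A M : Type u) [CommRing A] [IsLocalRing A] [AddCommGroup M] [Module A M] (d : ℕ) :
    Prop :=
  ∀ i < d, Subsingleton (Ext (ModuleCat.of A (A ⧸ maximalIdeal A)) (ModuleCat.of A M) i)

variable {A : Type u} [CommRing A] [IsLocalRing A]

lemma DepthGE.mono {M : Type u} [AddCommGroup M] [Module A M] {d e : ℕ} (h : DepthGE A M e)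
    (hde : d ≤ e) : DepthGE A M d :=
  fun i hi ↦ h i (hi.trans_le hde)

lemma DepthGE.of_exact {X Y Z : Type u} [AddCommGroup X] [Module A X] [AddCommGroup Y] [Module A Y]
    [AddCommGroup Z] [Module A Z] {d : ℕ} {f : X →ₗ[A] Y} {g : Y →ₗ[A] Z}
    (hX : DepthGE A X (d + 1)) (hY : DepthGE A Y d)
    (hf : Function.Injective f) (hfg : Function.Exact f g) (hg : Function.Surjective g) :
    DepthGE A Z d := by
  intro i hi
  let S : ShortComplex (ModuleCat A) := .mk (ModuleCat.ofHom f) (ModuleCat.ofHom g)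
    (ModuleCat.hom_ext hfg.linearMap_comp_eq_zero)
  have hS : S.ShortExact := ModuleCat.shortComplex_shortExact S hfg hf hg
  have hYi := AddCommGrpCat.isZero_of_iff_subsingleton.mpr (hY i hi)
  have hXi := AddCommGrpCat.isZero_of_iff_subsingleton.mpr (hX (i + 1) (by omega))
  exact AddCommGrpCat.subsingleton_of_isZero <| ShortComplex.Exact.isZero_of_both_zeros
    (Ext.covariant_sequence_exact₃' (.of A (A ⧸ maximalIdeal A)) hS i (i + 1) rfl)
    (hYi.eq_zero_of_src _) (hXi.eq_zero_of_tgt _)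

lemma DepthGE.of_subsingleton (M : Type u) [AddCommGroup M] [Module A M] [Subsingleton M] (d : ℕ) :
    DepthGE A M d := fun i _ ↦ by
  have hid : 𝟙 (ModuleCat.of A M) = 0 :=
    (ModuleCat.isZero_of_iff_subsingleton.mpr inferInstance).eq_of_src _ _
  refine subsingleton_of_forall_eq 0 fun e ↦ ?_
  rw [← e.comp_mk₀_id, hid, Ext.mk₀_zero, Ext.comp_zero]

lemma DepthGE.of_isWeaklyRegular [IsNoetherianRing A] {M : Type u} [AddCommGroup M] [Module A M]
    [Module.Finite A M] {rs : List A} (hrs : IsWeaklyRegular M rs)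
    (hmem : ∀ r ∈ rs, r ∈ maximalIdeal A) : DepthGE A M rs.length := by
  cases subsingleton_or_nontrivial M
  · exact .of_subsingleton M _
  · refine ModuleCat.subsingleton_ext_of_exists_isRegular (maximalIdeal A) _ ?_ _ ?_ rs hmem
      ((isRegular_iff_isWeaklyRegular_of_subset_maximalIdeal hmem).mpr hrs)
    · rw [Module.support_eq_zeroLocus, Ideal.annihilator_quotient]
    · exact (Submodule.top_ne_ideal_smul_of_le_jacobson_annihilator
        (maximalIdeal_le_jacobson _)).symm.lt_top

lemma isWeaklyRegular_of_flat {R F : Type*} [CommRing R] [AddCommGroup F] [Module R F]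
    [Module.Flat R F] {rs : List R} (hrs : IsWeaklyRegular R rs) : IsWeaklyRegular F rs :=
  ((TensorProduct.lid R F).isWeaklyRegular_congr rs).mp hrs.isWeaklyRegular_rTensor

lemma DepthGE.subsingleton_linearMap {M : Type u} [AddCommGroup M] [Module A M]
    (h : DepthGE A M 1) : Subsingleton ((A ⧸ maximalIdeal A) →ₗ[A] M) :=
  (Ext.addEquiv₀.trans ModuleCat.homAddEquiv).subsingleton_congr.mp (h 0 one_pos)

end Depth

section Freeness

variable {A M : Type u} {B : Type v} [CommRing A] [IsLocalRing A] [CommRing B] [Algebra A B]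
  [AddCommGroup M] [Module B M] [Module A M] [IsScalarTower A B M]

lemma maximalIdeal_notMem_associatedPrimes_of_subsingleton_linearMap [IsLocalRing B]
    [IsNoetherianRing B] [IsLocalHom (algebraMap A B)]
    (hhom : Subsingleton ((A ⧸ maximalIdeal A) →ₗ[A] M)) :
    maximalIdeal B ∉ associatedPrimes B M := fun hm ↦ by
  obtain ⟨hprime, f, hf⟩ := (isAssociatedPrime_iff_exists_injective_linearMap _ _).mp hm
  let ι : (A ⧸ maximalIdeal A) →ₐ[A] B ⧸ maximalIdeal B :=
    Ideal.quotientMapₐ _ (Algebra.ofId A B) (maximalIdeal_comap (algebraMap A B)).ge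
  have hι : f (ι 1) = 0 :=
    LinearMap.congr_fun (hhom.elim (f.restrictScalars A ∘ₗ ι.toLinearMap) 0) 1
  rw [map_one] at hι
  exact one_ne_zero (hf (hι.trans (map_zero f).symm))

lemma exists_isSMulRegular_mem_maximalIdeal_notMem_sq [IsLocalRing B] [IsNoetherianRing B]
    (hB : maximalIdeal B ≠ ⊥) {N : Type*} [AddCommGroup N] [Module B N] [Module.Finite B N]
    (hN : maximalIdeal B ∉ associatedPrimes B N) :
    ∃ x ∈ maximalIdeal B, x ∉ maximalIdeal B ^ 2 ∧ IsSMulRegular N x := by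
  obtain ⟨x, hx, hx', hass⟩ := exists_mem_maximalIdeal_notMem_sq_notMem_primes hB
    (associatedPrimes.finite B N) (fun p hp ↦ hp.isPrime) hN
  refine ⟨x, hx, hx', ?_⟩
  have hunion : x ∉ ⋃ p ∈ associatedPrimes B N, (p : Set B) := by simpa using hass
  rw [biUnion_associatedPrimes_eq_compl_regular] at hunion
  exact Set.notMem_compl_iff.mp hunion

open Pointwise in
lemma DepthGE.quotSMulTop {x : B} (hx : IsSMulRegular M x) {d : ℕ} (h : DepthGE A M (d + 1)) :
    DepthGE A (QuotSMulTop x M) d := by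
  let f : M →ₗ[A] M := (LinearMap.lsmul B M x).restrictScalars A
  let g : M →ₗ[A] QuotSMulTop x M := (Submodule.mkQ (x • (⊤ : Submodule B M))).restrictScalars A
  have hf : Function.Injective f := fun _ _ hxy ↦ hx hxy
  have hg : Function.Surjective g := Submodule.mkQ_surjective (x • (⊤ : Submodule B M))
  have hfg : Function.Exact f g := LinearMap.exact_lsmul_mkQ_smul_top M x
  exact h.of_exact (h.mono d.le_succ) hf hfg hg

theorem free_of_depthGE_spanFinrank_maximalIdeal [IsRegularLocalRing B]
    [IsLocalHom (algebraMap A B)] [Module.Finite A M]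
    (h : DepthGE A M (maximalIdeal B).spanFinrank) : Module.Free B M := by
  induction hd : (maximalIdeal B).spanFinrank generalizing B M with
  | zero =>
    have hbot := (Submodule.spanFinrank_eq_zero_iff_eq_bot (IsNoetherian.noetherian _)).mp hd
    let _ := (isField_iff_maximalIdeal_eq.mpr hbot).toField
    exact Module.Free.of_divisionRing B M
  | succ d ih =>
    rw [hd] at h
    have : Module.Finite B M := .of_restrictScalars_finite A B M
    have hass : maximalIdeal B ∉ associatedPrimes B M :=
      maximalIdeal_notMem_associatedPrimes_of_subsingleton_linearMap
        (h.mono (Nat.le_add_left 1 d)).subsingleton_linearMap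
    obtain ⟨x, hx, hx', hreg⟩ := exists_isSMulRegular_mem_maximalIdeal_notMem_sq
      (fun h0 ↦ by simp [h0] at hd) hass
    have := isRegularLocalRing_quotient_span_singleton hx hx'
    have hd' : (maximalIdeal (B ⧸ Ideal.span {x})).spanFinrank = d :=
      Nat.succ_injective ((spanFinrank_maximalIdeal_quotient_add_one hx hx').trans hd)
    have : IsLocalHom (algebraMap A (B ⧸ Ideal.span {x})) :=
      have := IsLocalHom.of_surjective (Ideal.Quotient.mk (Ideal.span {x}))
        Ideal.Quotient.mk_surjective
      inferInstanceAs (IsLocalHom ((Ideal.Quotient.mk (Ideal.span {x})).comp (algebraMap A B)))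
    have : Module.FinitePresentation B M := Module.finitePresentation_of_finite B M
    rw [← Module.free_quotSMulTop_iff_free B M (maximalIdeal_le_jacobson _ hx) hreg]
    exact ih (hd' ▸ h.quotSMulTop hreg) hd'

end Freeness

section AssociatedPrimes

open Pointwise RingTheory.Sequence

variable {R : Type*} [CommRing R] [IsNoetherianRing R]

lemma exists_mem_associatedPrimes_quotSMulTop {M : Type*} [AddCommGroup M] [Module R M]
    [Module.Finite R M] {x : R} (hx : x ∈ (⊥ : Ideal R).jacobson) (hreg : IsSMulRegular M x)
    {p : Ideal R} (hp : p ∈ associatedPrimes R M) :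
    ∃ q ∈ associatedPrimes R (QuotSMulTop x M), p ≤ q ∧ x ∈ q := by
  obtain ⟨hprime, f, hf⟩ := (isAssociatedPrime_iff_exists_injective_linearMap _ _).mp hp
  -- By Nakayama, some `l` annihilated by `p` lies outside `x • M`; its class gives `q`.
  let L := Submodule.torsionBySet R M p
  have hL : ¬ L ≤ x • (⊤ : Submodule R M) := fun hle ↦ by
    have hLx : L ≤ Ideal.span {x} • L := fun l hl ↦ by
      obtain ⟨m, -, rfl⟩ := Submodule.mem_smul_pointwise_iff_exists _ _ _ |>.mp (hle hl)
      refine Submodule.smul_mem_smul (Ideal.mem_span_singleton_self x) ?_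
      refine (Submodule.mem_torsionBySet_iff _ _).mpr fun a ↦ hreg ?_
      simpa only [smul_zero, smul_comm x] using (Submodule.mem_torsionBySet_iff _ _).mp hl a
    have hbot : L = ⊥ := Submodule.eq_bot_of_le_smul_of_le_jacobson_bot _ _
      (IsNoetherian.noetherian L) hLx (by simpa [Ideal.span_le] using hx)
    have h1 : f 1 ∈ L := (Submodule.mem_torsionBySet_iff _ _).mpr fun a ↦ by
      have ha : (a : R) • (1 : R ⧸ p) = 0 := by
        rw [Algebra.smul_def, mul_one]
        exact Ideal.Quotient.eq_zero_iff_mem.mpr a.2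
      exact (map_smul f (a : R) 1).symm.trans ((congrArg f ha).trans (map_zero f))
    rw [hbot, Submodule.mem_bot] at h1
    exact one_ne_zero (hf (h1.trans (map_zero f).symm))
  obtain ⟨l, hl, hlx⟩ := Set.not_subset.mp hL
  let y : QuotSMulTop x M := Submodule.Quotient.mk l
  have hy : y ≠ 0 := (Submodule.Quotient.mk_eq_zero _).not.mpr hlx
  obtain ⟨q, hq, hle⟩ := exists_le_isAssociatedPrime_of_isNoetherianRing R y hy
  refine ⟨q, hq, fun a ha ↦ hle ?_, hle ?_⟩ <;>
    rw [Submodule.mem_colon_singleton, Submodule.mem_bot, ← Submodule.Quotient.mk_smul]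
  · rw [(Submodule.mem_torsionBySet_iff _ _).mp hl ⟨a, ha⟩, Submodule.Quotient.mk_zero]
  · exact (Submodule.Quotient.mk_eq_zero _).mpr (Submodule.smul_mem_pointwise_smul _ _ _ trivial)

lemma length_le_ringKrullDim_quotient_of_mem_associatedPrimes {M : Type*} [AddCommGroup M]
    [Module R M] [Module.Finite R M] {rs : List R} (hrs : IsWeaklyRegular M rs)
    (hmem : ∀ r ∈ rs, r ∈ (⊥ : Ideal R).jacobson) {p : Ideal R} (hp : p ∈ associatedPrimes R M) :
    rs.length ≤ ringKrullDim (R ⧸ p) := by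
  induction rs generalizing M p with
  | nil =>
    have := hp.isPrime
    exact ringKrullDim_nonneg_of_nontrivial
  | cons x rs ih =>
    obtain ⟨hx, hrs⟩ := (isWeaklyRegular_cons_iff M x rs).mp hrs
    obtain ⟨q, hq, hpq, hxq⟩ := exists_mem_associatedPrimes_quotSMulTop (hmem x (by simp)) hx hp
    have hxp : x ∉ p := fun hxp ↦ by
      have h := Set.mem_biUnion hp hxp
      rw [biUnion_associatedPrimes_eq_compl_regular] at h
      exact h hx
    have := hp.isPrime
    have hmk : Ideal.Quotient.mk p x ≠ 0 := Ideal.Quotient.eq_zero_iff_mem.not.mpr hxp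
    calc ((x :: rs).length : WithBot ℕ∞)
      _ = rs.length + 1 := by simp
      _ ≤ ringKrullDim (R ⧸ q) + 1 := by gcongr; exact ih hrs (fun r hr ↦ hmem r (by simp [hr])) hq
      _ ≤ ringKrullDim (R ⧸ p) :=
        ringKrullDim_succ_le_of_surjective (Ideal.Quotient.factor hpq)
          (Ideal.Quotient.factor_surjective hpq) (mem_nonZeroDivisors_of_ne_zero hmk)
          (Ideal.Quotient.eq_zero_iff_mem.mpr hxq)

lemma exists_mem_nonZeroDivisors_of_ringKrullDim_quotient_lt {rs : List R}
    (hrs : IsWeaklyRegular R rs) (hmem : ∀ r ∈ rs, r ∈ (⊥ : Ideal R).jacobson) {I : Ideal R}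
    (hI : ringKrullDim (R ⧸ I) < rs.length) : ∃ a ∈ I, a ∈ nonZeroDivisors R := by
  by_contra! h
  have hcover : (I : Set R) ⊆ ⋃ p ∈ associatedPrimes R R, (p : Set R) := by
    rw [biUnion_associatedPrimes_eq_compl_nonZeroDivisors]
    exact h
  obtain ⟨p, hp, hle⟩ := (Ideal.subset_union_prime_finite (associatedPrimes.finite R R) (f := id)
    ⊥ ⊥ fun p hp _ _ ↦ hp.isPrime).mp hcover
  have hlen := length_le_ringKrullDim_quotient_of_mem_associatedPrimes hrs hmem hp
  exact hI.not_ge (hlen.trans (ringKrullDim_le_of_surjective (Ideal.Quotient.factor hle)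
    (Ideal.Quotient.factor_surjective hle)))

end AssociatedPrimes

section Annihilator

lemma ringKrullDim_le_of_isIntegral {R S : Type*} [CommRing R] [CommRing S] [Algebra R S]
    [Algebra.IsIntegral R S] [FaithfulSMul R S] : ringKrullDim R ≤ ringKrullDim S := by
  refine iSup_le fun l ↦ ?_
  obtain ⟨P, hP, hP'⟩ := Ideal.nonempty_primesOver (S := S) (RelSeries.head l).asIdeal
  obtain ⟨L, hL, -⟩ := Ideal.exists_ltSeries_of_hasGoingUp l P
  exact hL ▸ le_iSup (fun L : LTSeries (PrimeSpectrum S) ↦ (L.length : WithBot ℕ∞)) L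

variable (A B M : Type*) [CommRing A] [CommRing B] [Algebra A B] [AddCommGroup M] [Module A M]
  [Module B M] [IsScalarTower A B M]

lemma liesOver_annihilator : (Module.annihilator B M).LiesOver (Module.annihilator A M) := by
  refine ⟨Ideal.ext fun a ↦ ?_⟩
  simp only [Ideal.under, Ideal.mem_comap, Module.mem_annihilator, algebraMap_smul]

lemma isIntegral_quotient_annihilator [Module.Finite A M] :
    Algebra.IsIntegral A (B ⧸ Module.annihilator B M) := by
  refine ⟨Ideal.Quotient.mk_surjective.forall.mpr fun b ↦ ?_⟩
  obtain ⟨p, hp, hp0⟩ := LinearMap.exists_monic_and_aeval_eq_zero A (Algebra.lsmul A A M b)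
  rw [Polynomial.aeval_algHom_apply] at hp0
  refine ⟨p, hp, ?_⟩
  change Polynomial.aeval (Ideal.Quotient.mkₐ A (Module.annihilator B M) b) p = 0
  rw [Polynomial.aeval_algHom_apply]
  exact Ideal.Quotient.eq_zero_iff_mem.mpr
    (Module.mem_annihilator.mpr fun m ↦ LinearMap.congr_fun hp0 m)

theorem ringKrullDim_quotient_annihilator_le [Module.Finite A M] :
    ringKrullDim (A ⧸ Module.annihilator A M) ≤ ringKrullDim B := by
  have := liesOver_annihilator A B M
  have := isIntegral_quotient_annihilator A B M
  have : Algebra.IsIntegral (A ⧸ Module.annihilator A M) (B ⧸ Module.annihilator B M) :=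
    .tower_top A
  exact (ringKrullDim_le_of_isIntegral (S := B ⧸ Module.annihilator B M)).trans
    (ringKrullDim_quotient_le _)

end Annihilator

lemma injective_of_isSMulRegular_of_smul_mem_range {R F : Type*} [CommRing R] [AddCommGroup F]
    [Module R F] [Module.Finite R F] {φ : F →ₗ[R] F} {a : R} (ha : IsSMulRegular F a)
    (h : ∀ x, a • x ∈ LinearMap.range φ) : Function.Injective φ := by
  -- The fibre product of `φ` and `a` embeds in `F` and surjects onto it, so Orzech applies.
  let N := LinearMap.eqLocus (φ ∘ₗ LinearMap.fst R F F) (a • LinearMap.snd R F F)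
  have hmem (z : N) : φ z.1.1 = a • z.1.2 := z.2
  let π₁ : N →ₗ[R] F := LinearMap.fst R F F ∘ₗ N.subtype
  let π₂ : N →ₗ[R] F := LinearMap.snd R F F ∘ₗ N.subtype
  have h₁ : Function.Injective π₁ := fun z w hzw ↦ by
    refine Subtype.ext (Prod.ext hzw (ha ?_))
    change a • z.1.2 = a • w.1.2
    rw [← hmem, ← hmem]
    exact congrArg φ hzw
  have h₂ : Function.Surjective π₂ := fun y ↦
    have ⟨x, hx⟩ := h y
    ⟨⟨(x, y), hx⟩, rfl⟩
  have h₂' : Function.Injective π₂ :=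
    OrzechProperty.injective_of_surjective_of_injective π₁ π₂ h₁ h₂
  refine (injective_iff_map_eq_zero φ).mpr fun x hx ↦ ?_
  have hz : (x, (0 : F)) ∈ N := hx.trans (smul_zero a).symm
  exact congrArg (fun z : N ↦ z.1.1) (h₂' (a₁ := ⟨(x, 0), hz⟩) (a₂ := 0) rfl)

section Tor

open MonoidalCategory Limits

variable {A : Type u} [CommRing A]

/-- The complex `X ⊗ P`. When `P` is a projective resolution of `k`, its homology is `Tor(X, k)`;
Mathlib derives `Tor` in its second variable. -/
noncomputable abbrev tensorComplex (X : ModuleCat.{u} A) (P : ChainComplex (ModuleCat.{u} A) ℕ) :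
    ChainComplex (ModuleCat.{u} A) ℕ :=
  (((tensoringLeft (ModuleCat.{u} A)).obj X).mapHomologicalComplex _).obj P

/-- The map of complexes `X ⊗ P ⟶ Y ⊗ P` induced by `f : X ⟶ Y`. -/
noncomputable abbrev tensorComplexMap {X Y : ModuleCat.{u} A} (f : X ⟶ Y)
    (P : ChainComplex (ModuleCat.{u} A) ℕ) : tensorComplex X P ⟶ tensorComplex Y P :=
  (NatTrans.mapHomologicalComplex ((tensoringLeft (ModuleCat.{u} A)).map f) _).app P

/-- The sequence of complexes `X₁ ⊗ P ⟶ X₂ ⊗ P ⟶ X₃ ⊗ P` attached to `X₁ ⟶ X₂ ⟶ X₃`. -/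
noncomputable abbrev tensorShortComplex (S : ShortComplex (ModuleCat.{u} A))
    (P : ChainComplex (ModuleCat.{u} A) ℕ) : ShortComplex (ChainComplex (ModuleCat.{u} A) ℕ) :=
  .mk (tensorComplexMap S.f P) (tensorComplexMap S.g P) <| by
    ext i : 1
    change S.f ▷ P.X i ≫ S.g ▷ P.X i = 0
    rw [← comp_whiskerRight, S.zero, MonoidalPreadditive.zero_whiskerRight]

lemma tensorShortComplex_shortExact {S : ShortComplex (ModuleCat.{u} A)} (hS : S.ShortExact)
    (P : ChainComplex (ModuleCat.{u} A) ℕ) [∀ i, Projective (P.X i)] :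
    (tensorShortComplex S P).ShortExact := by
  refine HomologicalComplex.shortExact_of_degreewise_shortExact _ fun i ↦ ?_
  have : Module.Projective A (P.X i) := (IsProjective.iff_projective (P.X i)).mpr inferInstance
  exact hS.map_of_exact (tensorRight (P.X i))

lemma tensorComplex_exactAt (X : ModuleCat.{u} A) [Module.Flat A X]
    {P : ChainComplex (ModuleCat.{u} A) ℕ} {i : ℕ} (h : P.ExactAt i) :
    (tensorComplex X P).ExactAt i :=
  Module.Flat.lTensor_shortComplex_exact X (P.sc i) h

variable {k : ModuleCat.{u} A}

/-- `H₀(X ⊗ P) ≅ X ⊗ k` for a projective resolution `P` of `k`. -/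
noncomputable def tensorComplexHomologyZeroIso (X : ModuleCat.{u} A) (P : ProjectiveResolution k) :
    (tensorComplex X P.complex).homology 0 ≅ X ⊗ k :=
  have : PreservesFiniteColimits ((tensoringLeft (ModuleCat.{u} A)).obj X) :=
    inferInstanceAs (PreservesFiniteColimits (tensorLeft X))
  ChainComplex.isoHomologyι₀ (tensorComplex X P.complex) ≪≫
    asIso (P.fromLeftDerivedZero' ((tensoringLeft (ModuleCat.{u} A)).obj X))

lemma tensorComplexHomologyZeroIso_hom_naturality {X Y : ModuleCat.{u} A} (f : X ⟶ Y)
    (P : ProjectiveResolution k) :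
    HomologicalComplex.homologyMap (tensorComplexMap f P.complex) 0 ≫
        (tensorComplexHomologyZeroIso Y P).hom =
      (tensorComplexHomologyZeroIso X P).hom ≫ f ▷ k := by
  have hnat : P.fromLeftDerivedZero' ((tensoringLeft (ModuleCat.{u} A)).obj X) ≫ f ▷ k =
      HomologicalComplex.opcyclesMap (tensorComplexMap f P.complex) 0 ≫
        P.fromLeftDerivedZero' ((tensoringLeft (ModuleCat.{u} A)).obj Y) := by
    rw [← cancel_epi (HomologicalComplex.pOpcycles _ _),
      P.pOpcycles_comp_fromLeftDerivedZero'_assoc, HomologicalComplex.p_opcyclesMap_assoc,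
      P.pOpcycles_comp_fromLeftDerivedZero']
    exact ((tensoringLeft (ModuleCat.{u} A)).map f).naturality _
  simp only [tensorComplexHomologyZeroIso, Iso.trans_hom, asIso_hom, Category.assoc, hnat]
  exact HomologicalComplex.homologyι_naturality_assoc _ _ _

/-- Dimension shifting: `Tor₁(X₃, k) ≅ X₁ ⊗ k` when `X₂` is flat and `X₁ ⊗ k ⟶ X₂ ⊗ k` vanishes, by
the connecting homomorphism of `0 ⟶ X₁ ⟶ X₂ ⟶ X₃ ⟶ 0`. -/
noncomputable def torOneIsoTensorObj {S : ShortComplex (ModuleCat.{u} A)} (hS : S.ShortExact)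
    [Module.Flat A S.X₂] (hf : S.f ▷ k = 0) :
    ((Tor (ModuleCat.{u} A) 1).obj S.X₃).obj k ≅ S.X₁ ⊗ k :=
  let P := projectiveResolution k
  have hT := tensorShortComplex_shortExact hS P.complex
  have hX₂ : IsZero ((tensorComplex S.X₂ P.complex).homology 1) :=
    (HomologicalComplex.exactAt_iff_isZero_homology _ 1).mp
      (tensorComplex_exactAt _ (P.complex_exactAt_succ 0))
  have hX₁ : HomologicalComplex.homologyMap (tensorComplexMap S.f P.complex) 0 = 0 := by
    rw [← cancel_mono (tensorComplexHomologyZeroIso S.X₂ P).hom,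
      tensorComplexHomologyZeroIso_hom_naturality, hf, comp_zero, zero_comp]
  have : Mono (hT.δ 1 0 rfl) := (hT.homology_exact₃ 1 0 rfl).mono_g (hX₂.eq_of_src _ _)
  have : Epi (hT.δ 1 0 rfl) := (hT.homology_exact₁ 1 0 rfl).epi_f hX₁
  have : IsIso (hT.δ 1 0 rfl) := isIso_of_mono_of_epi _
  let e : (tensorComplex S.X₃ P.complex).homology 1 ≅ (tensorComplex S.X₁ P.complex).homology 0 :=
    asIso (hT.δ 1 0 rfl)
  P.isoLeftDerivedObj ((tensoringLeft (ModuleCat.{u} A)).obj S.X₃) 1 ≪≫ e ≪≫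
    tensorComplexHomologyZeroIso S.X₁ P

end Tor

section MinimalPresentation

open TensorProduct

lemma exists_surjective_of_finrank_tensorProduct_le {A N : Type*} [CommRing A] [IsLocalRing A]
    [AddCommGroup N] [Module A N] [Module.Finite A N] {n : ℕ}
    (h : Module.finrank (A ⧸ maximalIdeal A) ((A ⧸ maximalIdeal A) ⊗[A] N) ≤ n) :
    ∃ q : (Fin n → A) →ₗ[A] N, Function.Surjective q := by
  have hrank := TensorProduct.spanFinrank_top_eq_of_residueField (R := A) (⊤ : Submodule A N)
    Module.Finite.fg_top
  rw [← Module.finrank_eq_spanFinrank_of_free,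
    (Submodule.topEquiv.baseChange A (ResidueField A) (⊤ : Submodule A N) N).finrank_eq] at hrank
  obtain ⟨s, hs, hspan⟩ := Submodule.FG.exists_span_finset_card_eq_spanFinrank
    (Module.Finite.fg_top (R := A) (M := N))
  have hcard : Fintype.card s ≤ Fintype.card (Fin n) := by
    rw [Fintype.card_coe, Fintype.card_fin, hs, ← hrank]
    exact h
  obtain ⟨e⟩ := Function.Embedding.nonempty_of_card_le hcard
  refine ⟨Fintype.linearCombination A (Function.extend e ((↑) : s → N) 0), ?_⟩
  rw [← LinearMap.range_eq_top, Fintype.range_linearCombination, eq_top_iff, ← hspan]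
  exact Submodule.span_mono fun x hx ↦ ⟨e ⟨x, hx⟩, e.injective.extend_apply _ _ _⟩

variable {A : Type u} [CommRing A] [IsLocalRing A] {M : Type u} [AddCommGroup M] [Module A M]

lemma ker_subtype_lTensor_eq_zero_of_finrank_eq {n : ℕ} {p : (Fin n → A) →ₗ[A] M}
    (hp : Function.Surjective p)
    (h : Module.finrank (A ⧸ maximalIdeal A) ((A ⧸ maximalIdeal A) ⊗[A] M) = n) :
    (LinearMap.ker p).subtype.lTensor (A ⧸ maximalIdeal A) = 0 := by
  let _ : Field (A ⧸ maximalIdeal A) := Ideal.Quotient.field _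
  let P := p.baseChange (A ⧸ maximalIdeal A)
  have hrank : Module.finrank (A ⧸ maximalIdeal A) ((A ⧸ maximalIdeal A) ⊗[A] (Fin n → A)) =
      Module.finrank (A ⧸ maximalIdeal A) ((A ⧸ maximalIdeal A) ⊗[A] M) := by
    rw [h, Module.finrank_baseChange, Module.finrank_fin_fun]
  have : Module.Finite A M := .of_surjective p hp
  have hP : Function.Injective P :=
    (LinearMap.injective_iff_surjective_of_finrank_eq_finrank hrank).mpr
      (LinearMap.lTensor_surjective _ hp)
  refine LinearMap.ext fun x ↦ hP ?_
  rw [LinearMap.zero_apply, map_zero]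
  change (p.lTensor _ ∘ₗ (LinearMap.ker p).subtype.lTensor _) x = 0
  rw [← LinearMap.lTensor_comp, LinearMap.comp_ker_subtype, LinearMap.lTensor_zero,
    LinearMap.zero_apply]

/-- `torOne` for a ring and a module in an arbitrary universe. -/
noncomputable abbrev torOneResidueField (A M : Type u) [CommRing A] [IsLocalRing A]
    [AddCommGroup M] [Module A M] : ModuleCat.{u} A :=
  ((Tor (ModuleCat.{u} A) 1).obj (.of A M)).obj (.of A (A ⧸ maximalIdeal A))

/-- `Tor₁(M, k) ≅ k ⊗ ker p` for a surjection `p` from a flat module which is minimal, that is, such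
that `k ⊗ ker p` vanishes in `k ⊗ F`. -/
noncomputable def torOneResidueFieldEquiv {F : Type u} [AddCommGroup F] [Module A F]
    [Module.Flat A F] {p : F →ₗ[A] M} (hp : Function.Surjective p)
    (hker : (LinearMap.ker p).subtype.lTensor (A ⧸ maximalIdeal A) = 0) :
    torOneResidueField A M ≃ₗ[A] (A ⧸ maximalIdeal A) ⊗[A] LinearMap.ker p :=
  let S : ShortComplex (ModuleCat.{u} A) :=
    .mk (ModuleCat.ofHom (LinearMap.ker p).subtype) (ModuleCat.ofHom p)
      (ModuleCat.hom_ext p.comp_ker_subtype)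
  have hS : S.ShortExact := ModuleCat.shortComplex_shortExact S
    (LinearMap.exact_subtype_ker_map p) (Submodule.injective_subtype _) hp
  have : Module.Flat A S.X₂ := inferInstanceAs (Module.Flat A F)
  have hf : (LinearMap.ker p).subtype.rTensor (A ⧸ maximalIdeal A) = 0 := by
    rw [← LinearMap.comm_comp_lTensor_comp_comm_eq, hker, LinearMap.zero_comp, LinearMap.comp_zero]
  (torOneIsoTensorObj hS (k := .of A (A ⧸ maximalIdeal A)) (ModuleCat.hom_ext hf)).toLinearEquiv ≪≫ₗ
    TensorProduct.comm A _ _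

theorem exists_exact_of_finrank_torOne_le [IsNoetherianRing A] [Module.Finite A M]
    [Module (A ⧸ maximalIdeal A) (torOneResidueField A M)]
    [IsScalarTower A (A ⧸ maximalIdeal A) (torOneResidueField A M)]
    (h : Module.finrank (A ⧸ maximalIdeal A) (torOneResidueField A M) ≤
      Module.finrank (A ⧸ maximalIdeal A) ((A ⧸ maximalIdeal A) ⊗[A] M)) :
    ∃ (n : ℕ) (φ : (Fin n → A) →ₗ[A] Fin n → A) (p : (Fin n → A) →ₗ[A] M),
      Function.Exact φ p ∧ Function.Surjective p := by
  obtain ⟨p, hp⟩ := exists_surjective_of_finrank_tensorProduct_le (A := A) (N := M) le_rfl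
  let e := torOneResidueFieldEquiv hp (ker_subtype_lTensor_eq_zero_of_finrank_eq hp rfl)
  rw [(e.extendScalarsOfSurjective (S := A ⧸ maximalIdeal A)
    Ideal.Quotient.mk_surjective).finrank_eq] at h
  obtain ⟨q, hq⟩ := exists_surjective_of_finrank_tensorProduct_le h
  refine ⟨_, (LinearMap.ker p).subtype ∘ₗ q, p, LinearMap.exact_iff.mpr ?_, hp⟩
  rw [LinearMap.range_comp, LinearMap.range_eq_top.mpr hq, Submodule.map_top,
    Submodule.range_subtype]

end MinimalPresentation

section RegularLocal

lemma spanFinrank_maximalIdeal_le_edim (R : Type) [CommRing R] [IsLocalRing R]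
    [IsNoetherianRing R] : (maximalIdeal R).spanFinrank ≤ edim R := by
  obtain ⟨n, s, hs⟩ := Submodule.fg_iff_exists_fin_generating_family.mp
    (IsNoetherian.noetherian (maximalIdeal R))
  obtain ⟨y, hy⟩ := Nat.sInf_mem
    (s := {k | ∃ y : Fin k → R, Ideal.span (Set.range y) = maximalIdeal R}) ⟨n, s, hs⟩
  calc (maximalIdeal R).spanFinrank
    _ = (Ideal.span (Set.range y)).spanFinrank := by rw [hy]
    _ ≤ (Set.range y).ncard :=
      Submodule.spanFinrank_span_le_ncard_of_finite (Set.finite_range y)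
    _ ≤ edim R := by
      rw [← Set.image_univ]
      exact (Set.ncard_image_le Set.finite_univ).trans_eq
        ((Set.ncard_univ _).trans (Nat.card_fin _))

lemma IsRegularLocal.isRegularLocalRing {R : Type} [CommRing R] [IsLocalRing R]
    (h : IsRegularLocal R) : IsRegularLocalRing R :=
  have := h.1
  .of_spanFinrank_maximalIdeal_le R <|
    h.2 ▸ Nat.cast_le.mpr (spanFinrank_maximalIdeal_le_edim R)

end RegularLocal

/-- The sequence `rs` witnesses `depth A > dim B`. -/
theorem CG_freeness_regular_case_general {A M : Type u} {B : Type v} [CommRing A] [IsLocalRing A]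
    [IsNoetherianRing A] [CommRing B] [IsRegularLocalRing B] [Algebra A B]
    [IsLocalHom (algebraMap A B)] [AddCommGroup M] [Module B M] [Module A M] [IsScalarTower A B M]
    [Module.Finite A M] {rs : List A} (hrs : RingTheory.Sequence.IsWeaklyRegular A rs)
    (hmem : ∀ r ∈ rs, r ∈ maximalIdeal A) (hdim : ringKrullDim B < rs.length)
    [Module (A ⧸ maximalIdeal A) (torOneResidueField A M)]
    [IsScalarTower A (A ⧸ maximalIdeal A) (torOneResidueField A M)]
    (hineq : Module.finrank (A ⧸ maximalIdeal A) (torOneResidueField A M) ≤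
      Module.finrank (A ⧸ maximalIdeal A) (TensorProduct A (A ⧸ maximalIdeal A) M)) :
    Module.Free B M := by
  obtain ⟨n, φ, p, hφp, hp⟩ := exists_exact_of_finrank_torOne_le hineq
  obtain ⟨a, ha, hreg⟩ := exists_mem_nonZeroDivisors_of_ringKrullDim_quotient_lt hrs
    (fun r hr ↦ maximalIdeal_le_jacobson _ (hmem r hr))
    ((ringKrullDim_quotient_annihilator_le A B M).trans_lt hdim)
  have hφ : Function.Injective φ :=
    injective_of_isSMulRegular_of_smul_mem_range (Module.Flat.isSMulRegular_of_nonZeroDivisors hreg)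
      fun x ↦ (hφp _).mp (by rw [map_smul, Module.mem_annihilator.mp ha])
  have hdepth : DepthGE A (Fin n → A) ((maximalIdeal B).spanFinrank + 1) := by
    rw [← IsRegularLocalRing.spanFinrank_maximalIdeal] at hdim
    exact (DepthGE.of_isWeaklyRegular (isWeaklyRegular_of_flat hrs) hmem).mono
      (Nat.cast_lt.mp hdim)
  exact free_of_depthGE_spanFinrank_maximalIdeal
    (hdepth.of_exact (hdepth.mono (Nat.le_succ _)) hφ hφp hp)

/-- Calegari–Geraghty freeness in the regular case: if `A → B` is a local morphism of
regular local rings with `dim A = dim B + 1` and `M` is a `B`-module, finite over `A`,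
with `dim_k Tor₁^A(M,k) ≤ dim_k Tor₀^A(M,k)`, then `M` is free over `B`. -/
theorem CG_freeness_regular_case
    {A B M : Type} [CommRing A] [IsLocalRing A] [CommRing B] [IsLocalRing B]
    [Algebra A B] [IsLocalHom (algebraMap A B)]
    (hA : IsRegularLocal A) (hB : IsRegularLocal B)
    (hdim : ringKrullDim A = ringKrullDim B + 1)
    [AddCommGroup M] [Module B M] [Module A M] [IsScalarTower A B M]
    [Module.Finite A M]
    (htor : Module.IsTorsionBySet A (torOne A M) ((maximalIdeal A : Ideal A) : Set A))
    (hineq :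
      (letI := Module.IsTorsionBySet.module htor
       Module.finrank (A ⧸ maximalIdeal A) (torOne A M)) ≤
      Module.finrank (A ⧸ maximalIdeal A)
        (TensorProduct A (A ⧸ maximalIdeal A) M)) :
    Module.Free B M := by
  have := hA.isRegularLocalRing
  have := hB.isRegularLocalRing
  have htor' : Module.IsTorsionBySet A (torOneResidueField A M) (maximalIdeal A : Set A) := htor
  let _ := htor'.module
  have : IsScalarTower A (A ⧸ maximalIdeal A) (torOneResidueField A M) := htor'.isScalarTower
  obtain ⟨rs, hlen, hmem, hrs⟩ := exists_isWeaklyRegular_of_isRegularLocalRing A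
  refine CG_freeness_regular_case_general hrs hmem ?_ ?_
  · rw [hlen, IsRegularLocalRing.spanFinrank_maximalIdeal, hdim,
      ← IsRegularLocalRing.spanFinrank_maximalIdeal]
    exact_mod_cast Nat.lt_succ_self _
  · exact hineq
end

section
/- Let A be a Noetherian local ring, M a finite A-module, I ⊆ m_A a proper ideal, Ā = A/I and M̄ = M/IM. Then t_Ā(M̄) ≤ t_A(M), where the torsion ratio t_R(N) of a nonzero finite module N over a Noetherian local ring R with residue field k is dim_k Tor_1^R(N,k) / dim_k Tor_0^R(N,k), and t_R(0) = 0. -/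
open IsLocalRing CategoryTheory

/-- The torsion ratio `t_A(M) = dim_k Tor₁^A(M,k) / dim_k Tor₀^A(M,k)` (interpreted as
`0` when `M = 0`, via the convention `0 / 0 = 0`). The hypothesis `ht` records the fact
that `Tor₁^A(M,k)` is annihilated by `𝔪`, which endows it with its `k`-vector space
structure. -/
noncomputable def torsionRatio (A : Type) [CommRing A] [IsLocalRing A]
    (M : Type) [AddCommGroup M] [Module A M]
    (ht : Module.IsTorsionBySet A (torOne A M) ((maximalIdeal A : Ideal A) : Set A)) :
    ℚ :=
  ((letI := Module.IsTorsionBySet.module ht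
    Module.finrank (A ⧸ maximalIdeal A) (torOne A M)) : ℚ) /
  ((Module.finrank (A ⧸ maximalIdeal A)
    (TensorProduct A (A ⧸ maximalIdeal A) M)) : ℚ)

/-! For a presentation `0 → L → F → M → 0` with `F` flat, the snake lemma identifies
`Tor₁(M, A ⧸ J)` with the kernel of `L ⧸ JL → F ⧸ JF`. Reducing modulo `I` gives a presentation of
`M ⧸ IM` by the flat `A ⧸ I`-module `F ⧸ IF`, whose syzygies `L'` are a quotient of `L`. If `J`
is the preimage of an ideal `J'` of `A ⧸ I`, then `F ⧸ JF` does not change while `L ⧸ JL` surjects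
onto `L' ⧸ J'L'`, so the kernel for `A` surjects onto the kernel for `A ⧸ I`. Dimensions over the
two residue fields are compared as lengths over `A`; the fibres of `M` and `M ⧸ IM` coincide. -/

universe u

section Syzygies

lemma nonempty_homology_lTensor_equiv_ker_rTensor {A F M X₂ X₁ X₀ Z : Type*} [CommRing A]
    [AddCommGroup F] [Module A F] [Module.Flat A F] [AddCommGroup M] [Module A M]
    [AddCommGroup X₂] [Module A X₂] [AddCommGroup X₁] [Module A X₁]
    [AddCommGroup X₀] [Module A X₀] [Module.Flat A X₀] [AddCommGroup Z] [Module A Z]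
    {f : F →ₗ[A] M} (hf : Function.Surjective f)
    {d₂ : X₂ →ₗ[A] X₁} {d₁ : X₁ →ₗ[A] X₀} {ε : X₀ →ₗ[A] Z}
    (h₁ : Function.Exact d₂ d₁) (h₀ : Function.Exact d₁ ε) (hε : Function.Surjective ε)
    (hd : ∀ x, d₂.lTensor M x ∈ LinearMap.ker (d₁.lTensor M)) :
    Nonempty ((LinearMap.ker (d₁.lTensor M) ⧸
        LinearMap.range ((d₂.lTensor M).codRestrict (LinearMap.ker (d₁.lTensor M)) hd)) ≃ₗ[A]
      LinearMap.ker ((LinearMap.ker f).subtype.rTensor Z)) := by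
  let ι := (LinearMap.ker f).subtype
  have hιf : Function.Exact ι f := f.exact_subtype_ker_map
  have hι₀ : Function.Injective (ι.rTensor X₀) :=
    Module.Flat.rTensor_preserves_injective_linearMap ι (Submodule.subtype_injective _)
  have hker : Function.Exact (LinearMap.ker (d₁.lTensor M)).subtype (d₁.lTensor M) :=
    LinearMap.exact_subtype_ker_map _
  have hcomm₁ : ι.rTensor X₀ ∘ₗ d₁.lTensor _ = d₁.lTensor F ∘ₗ ι.rTensor X₁ := by
    rw [LinearMap.rTensor_comp_lTensor, LinearMap.lTensor_comp_rTensor]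
  have hcomm₂ : f.rTensor X₀ ∘ₗ d₁.lTensor F = d₁.lTensor M ∘ₗ f.rTensor X₁ := by
    rw [LinearMap.rTensor_comp_lTensor, LinearMap.lTensor_comp_rTensor]
  let δ := SnakeLemma.δ' (d₁.lTensor (LinearMap.ker f)) (d₁.lTensor F) (d₁.lTensor M)
    (ι.rTensor X₁) (f.rTensor X₁) (rTensor_exact X₁ hιf hf)
    (ι.rTensor X₀) (f.rTensor X₀) (rTensor_exact X₀ hιf hf) hcomm₁ hcomm₂
    (LinearMap.ker (d₁.lTensor M)).subtype hker (ε.lTensor _) (lTensor_exact _ h₀ hε)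
    (LinearMap.rTensor_surjective X₁ hf) hι₀
  have hkerδ : LinearMap.ker δ = LinearMap.range ((d₂.lTensor M).codRestrict _ hd) := by
    have hexact := SnakeLemma.exact_δ'_right _ _ _ _ _ (rTensor_exact X₁ hιf hf) _ _
      (rTensor_exact X₀ hιf hf) hcomm₁ hcomm₂ (d₂.lTensor F) (Module.Flat.lTensor_exact F h₁)
      _ hker (ε.lTensor _) (lTensor_exact _ h₀ hε) (LinearMap.rTensor_surjective X₁ hf) hι₀
      ((d₂.lTensor M).codRestrict _ hd ∘ₗ f.rTensor X₂)
      (by rw [← LinearMap.comp_assoc, LinearMap.subtype_comp_codRestrict,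
        LinearMap.rTensor_comp_lTensor, LinearMap.lTensor_comp_rTensor])
      (Submodule.subtype_injective _)
    rw [hexact.linearMap_ker_eq, LinearMap.range_comp_of_range_eq_top _
      (LinearMap.range_eq_top.2 (LinearMap.rTensor_surjective X₂ hf))]
  have hrangeδ : LinearMap.range δ = LinearMap.ker (ι.rTensor Z) :=
    (SnakeLemma.exact_δ'_left _ _ _ _ _ (rTensor_exact X₁ hιf hf) _ _
      (rTensor_exact X₀ hιf hf) hcomm₁ hcomm₂ _ hker (ε.lTensor _) (lTensor_exact _ h₀ hε)
      (ε.lTensor F) (lTensor_exact F h₀ hε) (LinearMap.rTensor_surjective X₁ hf) hι₀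
      (ι.rTensor Z) (by rw [LinearMap.rTensor_comp_lTensor, LinearMap.lTensor_comp_rTensor])
      (LinearMap.lTensor_surjective _ hε)).linearMap_ker_eq.symm
  exact ⟨Submodule.quotEquivOfEq _ _ hkerδ.symm ≪≫ₗ δ.quotKerEquivRange ≪≫ₗ
    LinearEquiv.ofEq _ _ hrangeδ⟩

lemma nonempty_tor_one_equiv_ker_rTensor {A M Z : Type u} {F : Type*} [CommRing A]
    [AddCommGroup M] [Module A M] [AddCommGroup Z] [Module A Z]
    [AddCommGroup F] [Module A F] [Module.Flat A F]
    {f : F →ₗ[A] M} (hf : Function.Surjective f) :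
    Nonempty (((Tor (ModuleCat.{u} A) 1).obj (.of A M)).obj (.of A Z) ≃ₗ[A]
      LinearMap.ker ((LinearMap.ker f).subtype.rTensor Z)) := by
  let P := projectiveResolution (ModuleCat.of A Z)
  let D := (((MonoidalCategory.tensoringLeft (ModuleCat A)).obj (.of A M)).mapHomologicalComplex
    (ComplexShape.down ℕ)).obj P.complex
  have : Module.Projective A (P.complex.X 0) :=
    (IsProjective.iff_projective _).2 (P.projective 0)
  obtain ⟨e⟩ := nonempty_homology_lTensor_equiv_ker_rTensor hf
    ((ShortComplex.ShortExact.moduleCat_exact_iff_function_exact _).1 (P.exact_succ 0))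
    ((ShortComplex.ShortExact.moduleCat_exact_iff_function_exact _).1 P.exact₀)
    ((ModuleCat.epi_iff_surjective (P.π.f 0)).1 inferInstance)
    (D.sc' 2 1 0).moduleCat_zero_apply
  exact ⟨(P.isoLeftDerivedObj _ 1 ≪≫ D.homologyIsoSc' 2 1 0 (by simp) (by simp) ≪≫
    (D.sc' 2 1 0).moduleCatHomologyIso).toLinearEquiv ≪≫ₗ e⟩

lemma ker_eq_comap_ker_of_injective {A X Y X' Y' : Type*} [Ring A]
    [AddCommGroup X] [Module A X] [AddCommGroup Y] [Module A Y]
    [AddCommGroup X'] [Module A X'] [AddCommGroup Y'] [Module A Y']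
    {a : X →ₗ[A] Y} {b : X' →ₗ[A] Y'} {p : X →ₗ[A] X'} {q : Y →ₗ[A] Y'}
    (hq : Function.Injective q) (h : q ∘ₗ a = b ∘ₗ p) :
    LinearMap.ker a = (LinearMap.ker b).comap p := by
  rw [← LinearMap.ker_comp, ← h, LinearMap.ker_comp_of_ker_eq_bot _ (LinearMap.ker_eq_bot.2 hq)]

lemma length_ker_le_of_comp_eq {A X Y X' Y' : Type*} [Ring A]
    [AddCommGroup X] [Module A X] [AddCommGroup Y] [Module A Y]
    [AddCommGroup X'] [Module A X'] [AddCommGroup Y'] [Module A Y']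
    {a : X →ₗ[A] Y} {b : X' →ₗ[A] Y'} {p : X →ₗ[A] X'} {q : Y →ₗ[A] Y'}
    (hp : Function.Surjective p) (hq : Function.Injective q) (h : q ∘ₗ a = b ∘ₗ p) :
    Module.length A (LinearMap.ker b) ≤ Module.length A (LinearMap.ker a) := by
  have hker := ker_eq_comap_ker_of_injective hq h
  refine Module.length_le_of_surjective (p.restrict fun x hx ↦ hker.le hx) ?_
  rintro ⟨y, hy⟩
  obtain ⟨x, rfl⟩ := hp y
  exact ⟨⟨x, hker.ge hy⟩, rfl⟩

lemma nonempty_tor_one_quotient_equiv_ker_reduceModIdeal {A M : Type u} {F : Type*} [CommRing A]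
    [AddCommGroup M] [Module A M] [AddCommGroup F] [Module A F] [Module.Flat A F]
    {f : F →ₗ[A] M} (hf : Function.Surjective f) (J : Ideal A) :
    Nonempty (((Tor (ModuleCat.{u} A) 1).obj (.of A M)).obj (.of A (A ⧸ J)) ≃ₗ[A]
      LinearMap.ker (((LinearMap.ker f).subtype.reduceModIdeal J).restrictScalars A)) := by
  obtain ⟨e⟩ := nonempty_tor_one_equiv_ker_rTensor (Z := A ⧸ J) hf
  let eL := TensorProduct.tensorQuotEquivQuotSMul (LinearMap.ker f) J
  let eF := TensorProduct.tensorQuotEquivQuotSMul F J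
  have hcomm : eF.toLinearMap ∘ₗ (LinearMap.ker f).subtype.rTensor (A ⧸ J) =
      ((LinearMap.ker f).subtype.reduceModIdeal J).restrictScalars A ∘ₗ eL.toLinearMap := by
    refine TensorProduct.ext' fun x r ↦ ?_
    obtain ⟨r, rfl⟩ := Ideal.Quotient.mk_surjective r
    simp [eL, eF]
  exact ⟨e ≪≫ₗ LinearEquiv.ofEq _ _ (ker_eq_comap_ker_of_injective eF.injective hcomm) ≪≫ₗ
    eL.ofSubmodule' _⟩

end Syzygies

section ReductionMap

variable {A B N N' : Type*} [CommRing A] [CommRing B] [Algebra A B]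
  [AddCommGroup N] [Module A N] [AddCommGroup N'] [Module A N'] [Module B N'] [IsScalarTower A B N']

lemma comap_smul_top_le_comap (J : Ideal B) (g : N →ₗ[A] N') :
    (J.comap (algebraMap A B) • ⊤ : Submodule A N) ≤
      ((J • ⊤ : Submodule B N').restrictScalars A).comap g := by
  refine Submodule.smul_le.2 fun a ha x _ ↦ ?_
  have h : algebraMap A B a • g x ∈ (J • ⊤ : Submodule B N') :=
    Submodule.smul_mem_smul ha Submodule.mem_top
  rwa [algebraMap_smul, ← map_smul] at h

lemma comap_restrictScalars_smul_top (J : Ideal B)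
    (hB : Function.Surjective (algebraMap A B)) {g : N →ₗ[A] N'} (hg : Function.Surjective g)
    (hker : LinearMap.ker g ≤ J.comap (algebraMap A B) • ⊤) :
    ((J • ⊤ : Submodule B N').restrictScalars A).comap g =
      J.comap (algebraMap A B) • ⊤ := by
  have hJ : (J • ⊤ : Submodule B N').restrictScalars A =
      (J.comap (algebraMap A B) • ⊤ : Submodule A N).map g := by
    conv_lhs => rw [← Ideal.map_comap_of_surjective _ hB J]
    rw [Ideal.smul_restrictScalars, Submodule.restrictScalars_top, Submodule.map_smul'',
      Submodule.map_top, LinearMap.range_eq_top.2 hg]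
  rw [hJ, Submodule.comap_map_eq_self hker]

/-- The map `N ⧸ (J ∩ A)N → N' ⧸ JN'` induced by an `A`-linear map `g` from an `A`-module `N` to
a `B`-module `N'` and an ideal `J` of the `A`-algebra `B`. -/
def quotSMulTopMap (J : Ideal B) (g : N →ₗ[A] N') :
    (N ⧸ (J.comap (algebraMap A B) • ⊤ : Submodule A N)) →ₗ[A] N' ⧸ (J • ⊤ : Submodule B N') :=
  Submodule.liftQ _ ((J • ⊤ : Submodule B N').mkQ.restrictScalars A ∘ₗ g) <| by
    rw [LinearMap.ker_comp, LinearMap.ker_restrictScalars, Submodule.ker_mkQ]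
    exact comap_smul_top_le_comap J g

lemma quotSMulTopMap_surjective (J : Ideal B) {g : N →ₗ[A] N'} (hg : Function.Surjective g) :
    Function.Surjective (quotSMulTopMap J g) :=
  Function.Surjective.of_comp (g := Submodule.Quotient.mk)
    ((Submodule.Quotient.mk_surjective _).comp hg)

lemma quotSMulTopMap_injective (J : Ideal B)
    (hB : Function.Surjective (algebraMap A B)) {g : N →ₗ[A] N'} (hg : Function.Surjective g)
    (hker : LinearMap.ker g ≤ J.comap (algebraMap A B) • ⊤) :
    Function.Injective (quotSMulTopMap J g) := by
  rw [← LinearMap.ker_eq_bot]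
  refine Submodule.ker_liftQ_eq_bot _ _ _ ?_
  rw [LinearMap.ker_comp, LinearMap.ker_restrictScalars, Submodule.ker_mkQ,
    comap_restrictScalars_smul_top J hB hg hker]

end ReductionMap

section Quotient

variable {A M F : Type*} [CommRing A] [AddCommGroup M] [Module A M] [AddCommGroup F] [Module A F]

lemma quotSMulTopMap_mkQ_injective (I : Ideal A) (J : Ideal (A ⧸ I)) :
    Function.Injective (quotSMulTopMap J (I • ⊤ : Submodule A M).mkQ) := by
  refine quotSMulTopMap_injective J Ideal.Quotient.mk_surjective (Submodule.mkQ_surjective _) ?_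
  rw [Submodule.ker_mkQ]
  exact Submodule.smul_mono_left (Ideal.mk_ker.symm.trans_le (Ideal.ker_le_comap _))

lemma length_quotient_smul_top (I : Ideal A) (J : Ideal (A ⧸ I)) :
    Module.length (A ⧸ I)
        ((M ⧸ (I • ⊤ : Submodule A M)) ⧸
          (J • ⊤ : Submodule (A ⧸ I) (M ⧸ (I • ⊤ : Submodule A M)))) =
      Module.length A (M ⧸ (J.comap (algebraMap A (A ⧸ I)) • ⊤ : Submodule A M)) := by
  rw [← Module.length_eq_of_surjective (S := A) (R := A ⧸ I) Ideal.Quotient.mk_surjective]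
  exact (LinearEquiv.ofBijective (quotSMulTopMap J (I • ⊤ : Submodule A M).mkQ)
    ⟨quotSMulTopMap_mkQ_injective I J,
      quotSMulTopMap_surjective J (Submodule.mkQ_surjective _)⟩).length_eq.symm

lemma flat_quotient_smul_top [Module.Flat A M] (I : Ideal A) :
    Module.Flat (A ⧸ I) (M ⧸ (I • ⊤ : Submodule A M)) :=
  Module.Flat.of_linearEquiv
    ((TensorProduct.quotTensorEquivQuotSMul M I).extendScalarsOfSurjective
      Ideal.Quotient.mk_surjective).symm

lemma reduceModIdeal_surjective (I : Ideal A) {f : F →ₗ[A] M} (hf : Function.Surjective f) :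
    Function.Surjective (f.reduceModIdeal I) :=
  Function.Surjective.of_comp (g := Submodule.Quotient.mk)
    ((Submodule.Quotient.mk_surjective _).comp hf)

/-- The reduction modulo `I` of the syzygies of a presentation `f : F → M`. -/
noncomputable def kerReduceModIdeal (I : Ideal A) (f : F →ₗ[A] M) :
    LinearMap.ker f →ₗ[A] LinearMap.ker (f.reduceModIdeal I) :=
  (I • ⊤ : Submodule A F).mkQ.restrict (q := (LinearMap.ker (f.reduceModIdeal I)).restrictScalars A)
    fun x hx ↦ by simp_all

lemma kerReduceModIdeal_surjective (I : Ideal A) {f : F →ₗ[A] M} (hf : Function.Surjective f) :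
    Function.Surjective (kerReduceModIdeal I f) := by
  rintro ⟨y, hy⟩
  obtain ⟨x, rfl⟩ := Submodule.mkQ_surjective _ y
  have hx : f x ∈ (I • ⊤ : Submodule A F).map f := by
    rw [Submodule.map_smul'', Submodule.map_top, LinearMap.range_eq_top.2 hf]
    exact (Submodule.Quotient.mk_eq_zero _).1 hy
  obtain ⟨z, hz, hzx⟩ := hx
  refine ⟨⟨x - z, by simp [hzx]⟩, Subtype.ext ?_⟩
  exact (Submodule.Quotient.eq _).2 (by simpa using hz)

end Quotient

lemma length_tor_one_quotient_le {A M : Type u} [CommRing A] [AddCommGroup M] [Module A M]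
    (I : Ideal A) (J : Ideal (A ⧸ I)) :
    Module.length (A ⧸ I) (((Tor (ModuleCat.{u} (A ⧸ I)) 1).obj
        (.of (A ⧸ I) (M ⧸ (I • ⊤ : Submodule A M)))).obj (.of (A ⧸ I) ((A ⧸ I) ⧸ J))) ≤
      Module.length A (((Tor (ModuleCat.{u} A) 1).obj (.of A M)).obj
        (.of A (A ⧸ J.comap (algebraMap A (A ⧸ I))))) := by
  let f := Finsupp.linearCombination A (id : M → M)
  have hf : Function.Surjective f := Finsupp.linearCombination_id_surjective A M
  have : Module.Flat (A ⧸ I) ((M →₀ A) ⧸ (I • ⊤ : Submodule A (M →₀ A))) :=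
    flat_quotient_smul_top I
  obtain ⟨e⟩ := nonempty_tor_one_quotient_equiv_ker_reduceModIdeal hf
    (J.comap (algebraMap A (A ⧸ I)))
  obtain ⟨e'⟩ := nonempty_tor_one_quotient_equiv_ker_reduceModIdeal
    (reduceModIdeal_surjective I hf) J
  rw [e.length_eq, e'.length_eq,
    ← Module.length_eq_of_surjective (S := A) (R := A ⧸ I) Ideal.Quotient.mk_surjective]
  exact length_ker_le_of_comp_eq
    (b := ((LinearMap.ker (f.reduceModIdeal I)).subtype.reduceModIdeal J).restrictScalars A)
    (p := quotSMulTopMap (N' := LinearMap.ker (f.reduceModIdeal I)) J (kerReduceModIdeal I f))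
    (quotSMulTopMap_surjective J (kerReduceModIdeal_surjective I hf))
    (quotSMulTopMap_mkQ_injective I J) (by ext; rfl)

lemma length_tor_one_ne_top {A M : Type u} [CommRing A] [AddCommGroup M] [Module A M]
    [Module.FinitePresentation A M] (J : Ideal A) [IsArtinianRing (A ⧸ J)] :
    Module.length A (((Tor (ModuleCat.{u} A) 1).obj (.of A M)).obj (.of A (A ⧸ J))) ≠ ⊤ := by
  obtain ⟨n, f, hf⟩ := Module.Finite.exists_fin' A M
  have : Module.Finite A (LinearMap.ker f) :=
    Module.Finite.iff_fg.2 (Module.FinitePresentation.fg_ker f hf)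
  obtain ⟨e⟩ := nonempty_tor_one_quotient_equiv_ker_reduceModIdeal hf J
  rw [e.length_eq]
  change Module.length A (LinearMap.ker ((LinearMap.ker f).subtype.reduceModIdeal J)) ≠ ⊤
  rw [Module.length_eq_of_surjective (R := A ⧸ J) Ideal.Quotient.mk_surjective]
  exact Module.length_ne_top

lemma finrank_quotient_eq_length {A V : Type*} [CommRing A] (J : Ideal A) [J.IsMaximal]
    [AddCommGroup V] [Module A V] [Module (A ⧸ J) V] [IsScalarTower A (A ⧸ J) V] :
    Module.finrank (A ⧸ J) V = (Module.length A V).toNat := by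
  let := Ideal.Quotient.field J
  rw [Module.length_eq_of_surjective (R := A ⧸ J) Ideal.Quotient.mk_surjective,
    Module.length_eq_rank]
  rfl

lemma torsionRatio_eq_length_div_length {A M : Type} [CommRing A] [IsLocalRing A]
    [AddCommGroup M] [Module A M]
    (ht : Module.IsTorsionBySet A (torOne A M) (maximalIdeal A : Set A)) :
    torsionRatio A M ht = (Module.length A (torOne A M)).toNat /
      (Module.length A (M ⧸ (maximalIdeal A • ⊤ : Submodule A M))).toNat := by
  let := Module.IsTorsionBySet.module ht
  have := Module.IsTorsionBySet.isScalarTower (S := A) ht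
  rw [torsionRatio, finrank_quotient_eq_length, finrank_quotient_eq_length,
    (TensorProduct.quotTensorEquivQuotSMul M (maximalIdeal A)).length_eq]

theorem torsionRatio_quotient_le_general {A M : Type} [CommRing A] [IsLocalRing A]
    [AddCommGroup M] [Module A M] [Module.FinitePresentation A M]
    (I : Ideal A) [IsLocalRing (A ⧸ I)]
    (ht : Module.IsTorsionBySet A (torOne A M) (maximalIdeal A : Set A))
    (ht' : Module.IsTorsionBySet (A ⧸ I) (torOne (A ⧸ I) (M ⧸ (I • ⊤ : Submodule A M)))
      (maximalIdeal (A ⧸ I) : Set (A ⧸ I))) :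
    torsionRatio (A ⧸ I) (M ⧸ (I • ⊤ : Submodule A M)) ht' ≤ torsionRatio A M ht := by
  have : IsLocalHom (algebraMap A (A ⧸ I)) := .of_surjective _ Ideal.Quotient.mk_surjective
  have hcomap := maximalIdeal_comap (algebraMap A (A ⧸ I))
  have htor := length_tor_one_quotient_le (M := M) I (maximalIdeal (A ⧸ I))
  rw [hcomap] at htor
  rw [torsionRatio_eq_length_div_length, torsionRatio_eq_length_div_length,
    length_quotient_smul_top, hcomap]
  gcongr
  · let := Ideal.Quotient.field (maximalIdeal A)
    exact length_tor_one_ne_top (maximalIdeal A)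
  · exact htor

/-- The torsion ratio decreases under reduction modulo a proper ideal `I ⊆ 𝔪`:
`t_{A/I}(M/IM) ≤ t_A(M)`. -/
theorem torsionRatio_quotient_le
    {A : Type} [CommRing A] [IsLocalRing A] [IsNoetherianRing A]
    {M : Type} [AddCommGroup M] [Module A M] [Module.Finite A M]
    (I : Ideal A) (hI : I ≤ maximalIdeal A)
    [IsLocalRing (A ⧸ I)]
    (ht : Module.IsTorsionBySet A (torOne A M) ((maximalIdeal A : Ideal A) : Set A))
    (ht' : Module.IsTorsionBySet (A ⧸ I)
      (torOne (A ⧸ I) (M ⧸ (I • ⊤ : Submodule A M)))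
      ((maximalIdeal (A ⧸ I) : Ideal (A ⧸ I)) : Set (A ⧸ I))) :
    torsionRatio (A ⧸ I) (M ⧸ (I • ⊤ : Submodule A M)) ht' ≤ torsionRatio A M ht := by
  have := Module.finitePresentation_of_finite A M
  exact torsionRatio_quotient_le_general I ht ht'
end
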